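/- arXiv:2211.03798 — 6 statements merged into one kernel-verified Lean document; each statement's English description precedes it below -/
import Mathlib

section
/- Let A be an additive abelian group and θ an exchange-statistics function on A. If a ∈ A has finite additive order N, then θ(a)^(2N) = 1; moreover, if N is odd, then θ(a)^N = 1. -/
/-- The braiding associated to an exchange-statistics function `θ`:
`B(a,b) = θ(a+b) · θ(a)⁻¹ · θ(b)⁻¹`. -/
noncomputable def braiding {A : Type*} [AddCommGroup A] (θ : A → ℂ) (a b : A) : ℂ :=
  θ (a + b) * (θ a)⁻¹ * (θ b)⁻¹

/-- An exchange-statistics function (Abelian anyon theory) on an additive abelian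
group `A`: a unimodular map `θ : A → ℂ` with `θ 0 = 1`, `θ (-a) = θ a`, whose
associated braiding is biadditive. -/
structure IsExchangeStats {A : Type*} [AddCommGroup A] (θ : A → ℂ) : Prop where
  abs_eq_one : ∀ a, ‖θ a‖ = 1
  map_zero : θ 0 = 1
  map_neg : ∀ a, θ (-a) = θ a
  braiding_add_left : ∀ a a' b, braiding θ (a + a') b = braiding θ a b * braiding θ a' b
  braiding_add_right : ∀ a b b', braiding θ a (b + b') = braiding θ a b * braiding θ a b'

/-- A Lagrangian subgroup of an Abelian anyon theory `(A, θ)`. -/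
def IsLagrangian {A : Type*} [AddCommGroup A] (θ : A → ℂ) (L : AddSubgroup A) : Prop :=
  (∀ c ∈ L, θ c = 1) ∧ (∀ c ∈ L, ∀ c' ∈ L, braiding θ c c' = 1) ∧
  (∀ a : A, a ∉ L → ∃ c ∈ L, braiding θ a c ≠ 1)

/-- If `a` has finite additive order `N`, then `θ(a)^(2N) = 1`; and if `N` is odd,
then `θ(a)^N = 1`. -/
theorem theta_pow_order {A : Type*} [AddCommGroup A] (θ : A → ℂ)
    (hθ : IsExchangeStats θ) (a : A) (N : ℕ) (hN : N ≠ 0) (ha : addOrderOf a = N) :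
    θ a ^ (2 * N) = 1 ∧ (Odd N → θ a ^ N = 1) := by
  have hne : ∀ x, θ x ≠ 0 := fun x h => by
    have := hθ.abs_eq_one x
    rw [h] at this
    simp at this
  have h0 : ∀ b, braiding θ 0 b = 1 := fun b => by
    simp [braiding, hθ.map_zero, hne b]
  have hB : braiding θ a a = θ a ^ 2 := by
    have h1 := hθ.braiding_add_left a (-a) a
    rw [add_neg_cancel, h0] at h1
    have h2 : braiding θ (-a) a = (θ a)⁻¹ * (θ a)⁻¹ := by
      simp [braiding, hθ.map_zero, hθ.map_neg]
    rw [h2] at h1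
    have := hne a
    field_simp at h1
    exact h1.symm
  have hBn : ∀ n : ℕ, braiding θ (n • a) a = θ a ^ (2 * n) := by
    intro n
    induction n with
    | zero => simp [h0]
    | succ k ih => rw [succ_nsmul, hθ.braiding_add_left, ih, hB]; ring
  have hT : ∀ n : ℕ, θ (n • a) = θ a ^ (n ^ 2) := by
    intro n
    induction n with
    | zero => simp [hθ.map_zero]
    | succ k ih =>
      have h1 : θ (k • a + a) = braiding θ (k • a) a * θ (k • a) * θ a := by
        have := hne a
        have := hne (k • a)
        unfold braiding
        field_simp
      rw [succ_nsmul, h1, hBn, ih]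
      ring
  have hz : N • a = 0 := by rw [← ha]; exact addOrderOf_nsmul_eq_zero a
  have e1 : θ a ^ (2 * N) = 1 := by rw [← hBn, hz, h0]
  refine ⟨e1, ?_⟩
  rintro ⟨k, hk⟩
  have e2 : θ a ^ (N ^ 2) = 1 := by rw [← hT, hz, hθ.map_zero]
  have e3 : N ^ 2 = 2 * N * k + N := by
    calc N ^ 2 = N * (2 * k + 1) := by rw [← hk]; ring
      _ = 2 * N * k + N := by ring
  rw [e3, pow_add, pow_mul, e1, one_pow, one_mul] at e2
  exact e2
end

section
/- Let N ≥ 1 be an integer and θ an exchange-statistics function on ZMod N. Then there exists an integer m such that θ(k) = exp(πi·m·(k.val)²/N) for every k ∈ ZMod N; moreover, if N is odd then m can be chosen even (so that θ(k) = exp(2πi·t·(k.val)²/N) for an integer t). -/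
theorem root_exp_aux (M : ℕ) (hM : M ≠ 0) (q : ℂ) (h : q ^ M = 1) :
    ∃ j : ℕ, q = Complex.exp (2 * Real.pi * Complex.I * j / M) := by
  have : NeZero M := ⟨hM⟩
  obtain ⟨j, _, hj⟩ := (Complex.isPrimitiveRoot_exp M hM).eq_pow_of_pow_eq_one h
  refine ⟨j, ?_⟩
  rw [← hj, ← Complex.exp_nat_mul]
  congr 1
  ring

/-- Every exchange-statistics function on `ZMod N` is of the form
`θ(k) = exp(πi·m·k.val²/N)` for some integer `m`; if `N` is odd, `m` can be
chosen even. -/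
theorem theta_cyclic_classification (N : ℕ) (hN : 1 ≤ N) (θ : ZMod N → ℂ)
    (hθ : IsExchangeStats θ) :
    ∃ m : ℤ,
      (∀ k : ZMod N,
        θ k = Complex.exp (Real.pi * Complex.I * (m : ℂ) * ((k.val : ℂ)) ^ 2 / (N : ℂ))) ∧
      (Odd N → Even m) := by
  have hNe : N ≠ 0 := by omega
  have : NeZero N := ⟨hNe⟩
  have hNC : (N : ℂ) ≠ 0 := by exact_mod_cast hNe
  have hne : ∀ a, θ a ≠ 0 := fun a h => by
    have := hθ.abs_eq_one a
    rw [h] at this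
    simp at this
  have hB0 : braiding θ 0 1 = 1 := by
    simp [braiding, hθ.map_zero, hne 1]
  have hb : braiding θ 1 1 = θ 1 ^ 2 := by
    have h1 := hθ.braiding_add_left (-1) 1 1
    rw [neg_add_cancel, hB0] at h1
    have h2 : braiding θ (-1) 1 = (θ 1)⁻¹ * (θ 1)⁻¹ := by
      simp [braiding, hθ.map_zero, hθ.map_neg]
    rw [h2] at h1
    have := hne 1
    field_simp at h1
    exact h1.symm
  have hBn : ∀ n : ℕ, braiding θ (n : ZMod N) 1 = (θ 1 ^ 2) ^ n := by
    intro n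
    induction n with
    | zero => simpa using hB0
    | succ k ih => rw [Nat.cast_succ, hθ.braiding_add_left, ih, hb, ← pow_succ]
  have hq : ∀ n : ℕ, θ (n : ZMod N) = θ 1 ^ (n ^ 2) := by
    intro n
    induction n with
    | zero => simpa using hθ.map_zero
    | succ k ih =>
      have h1 := hBn k
      unfold braiding at h1
      have h2 : θ ((k : ZMod N) + 1) = (θ 1 ^ 2) ^ k * θ k * θ 1 := by
        rw [← h1]
        have := hne 1
        have := hne k
        field_simp
      rw [Nat.cast_succ, h2, ih]
      ring
  have h2N : θ 1 ^ (2 * N) = 1 := by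
    have := hBn N
    rw [ZMod.natCast_self, hB0] at this
    rw [pow_mul, ← this]
  have hNN : θ 1 ^ (N ^ 2) = 1 := by
    rw [← hq N, ZMod.natCast_self, hθ.map_zero]
  have key : ∀ k : ZMod N, θ k = θ 1 ^ (k.val ^ 2) := by
    intro k
    rw [← hq, ZMod.natCast_zmod_val]
  rcases Nat.even_or_odd N with hE | hO
  · obtain ⟨j, hj⟩ := root_exp_aux (2 * N) (by omega) _ h2N
    refine ⟨j, fun k => ?_, fun h => absurd hE (Nat.not_even_iff_odd.mpr h)⟩
    rw [key, hj, ← Complex.exp_nat_mul]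
    congr 1
    push_cast
    field_simp
  · have hN1 : θ 1 ^ N = 1 := by
      obtain ⟨r, hr⟩ := hO
      have e : N ^ 2 = 2 * N * r + N := by
        rw [sq]
        nth_rewrite 2 [hr]
        ring
      rw [e, pow_add, pow_mul, h2N, one_pow, one_mul] at hNN
      exact hNN
    obtain ⟨j, hj⟩ := root_exp_aux N hNe _ hN1
    refine ⟨2 * j, fun k => ?_, fun _ => even_two_mul _⟩
    rw [key, hj, ← Complex.exp_nat_mul]
    congr 1
    push_cast
    field_simp
end

section
/- Let N ≥ 1 and consider the ℤ_N toric code anyon theory (A, θ_TC) on A = ZMod N × ZMod N with braiding B_TC. Then the set of anyons braiding trivially with the anyon e⁻¹m = (−1, 1) is exactly the diagonal subgroup: {a ∈ A : B_TC((−1,1), a) = 1} = {(k,k) : k ∈ ZMod N}. Moreover, θ_TC((k,k)) = exp(2πi·(k.val)²/N) for every k ∈ ZMod N. -/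
/-- The exchange statistics of the `ℤ_N` toric code anyon theory on
`ZMod N × ZMod N`: `θ_TC(e,m) = exp(2πi·e·m/N)`. -/
noncomputable def thetaTC (N : ℕ) (a : ZMod N × ZMod N) : ℂ :=
  Complex.exp (2 * Real.pi * Complex.I * (a.1.val : ℂ) * (a.2.val : ℂ) / (N : ℂ))

/-- The toric code statistics are the standard additive character of the product. -/
lemma thetaTC_eq_char (N : ℕ) [NeZero N] (a : ZMod N × ZMod N) :
    thetaTC N a = ZMod.stdAddChar (a.1 * a.2) := by
  have h := ZMod.stdAddChar_coe (N := N) ((a.1.val * a.2.val : ℕ) : ℤ)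
  have e : ((((a.1.val * a.2.val : ℕ) : ℤ)) : ZMod N) = a.1 * a.2 := by
    push_cast
    simp
  rw [e] at h
  rw [h, thetaTC]
  congr 1
  push_cast
  ring

/-- Braiding with `(-1,1)` is the standard character of the difference. -/
lemma braiding_thetaTC_antidiag (N : ℕ) [NeZero N] (a : ZMod N × ZMod N) :
    braiding (thetaTC N) (-1, 1) a = ZMod.stdAddChar (a.1 - a.2) := by
  simp only [braiding, thetaTC_eq_char, ← AddChar.map_neg_eq_inv, ← AddChar.map_add_eq_mul]
  congr 1
  simp only [Prod.fst_add, Prod.snd_add]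
  ring

/-- In the `ℤ_N` toric code theory, the anyons braiding trivially with
`e⁻¹m = (-1,1)` are exactly the diagonal anyons `(k,k)`, and the diagonal anyon
`(k,k)` has exchange statistics `exp(2πi·k²/N)`. -/
theorem gauge_out_antisemion_diag (N : ℕ) [NeZero N] :
    ({a : ZMod N × ZMod N | braiding (thetaTC N) (-1, 1) a = 1} =
      {a : ZMod N × ZMod N | ∃ k : ZMod N, a = (k, k)}) ∧
    (∀ k : ZMod N,
      thetaTC N (k, k) =
        Complex.exp (2 * Real.pi * Complex.I * ((k.val : ℂ)) ^ 2 / (N : ℂ))) := by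
  refine ⟨?_, fun k => ?_⟩
  · ext a
    simp only [Set.mem_setOf_eq, braiding_thetaTC_antidiag]
    constructor
    · intro h
      rw [← AddChar.map_zero_eq_one (ZMod.stdAddChar (N := N))] at h
      have h' := sub_eq_zero.mp (ZMod.injective_stdAddChar h)
      exact ⟨a.1, Prod.ext rfl h'.symm⟩
    · rintro ⟨k, rfl⟩
      simp
  · rw [thetaTC]
    congr 1
    ring
end

section
/- Define θ_3F on A = ZMod 2 × ZMod 2 by θ_3F(p,q) = (−1)^(p.val + p.val·q.val + q.val), so θ_3F(0,0) = 1 and θ_3F(x) = −1 for each of the three nonzero x. Then (i) θ_3F is an exchange-statistics function on A whose braiding satisfies B_3F(x,y) = −1 for all distinct nonzero x, y ∈ A; and (ii) (A, θ_3F) admits no Lagrangian subgroup. -/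
/-- The three-fermion exchange statistics on `ZMod 2 × ZMod 2`:
`θ_3F(p,q) = (-1)^(p + pq + q)`, so all three nonzero anyons are fermions. -/
noncomputable def theta3F (a : ZMod 2 × ZMod 2) : ℂ :=
  (-1 : ℂ) ^ (a.1.val + a.1.val * a.2.val + a.2.val)

/-- Integer-valued version of `theta3F`. -/
def tInt (a : ZMod 2 × ZMod 2) : ℤ := if a = 0 then 1 else -1

theorem theta3F_eq (a : ZMod 2 × ZMod 2) : theta3F a = (tInt a : ℂ) := by
  have h : ∀ a : ZMod 2 × ZMod 2,
      (-1 : ℤ) ^ (a.1.val + a.1.val * a.2.val + a.2.val) = tInt a := by decide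
  rw [← h a, theta3F]
  push_cast
  rfl

theorem tInt_inv (a : ZMod 2 × ZMod 2) : ((tInt a : ℂ))⁻¹ = (tInt a : ℂ) := by
  unfold tInt
  split_ifs <;> norm_num

theorem braiding_eq (a b : ZMod 2 × ZMod 2) :
    braiding theta3F a b = ((tInt (a + b) * tInt a * tInt b : ℤ) : ℂ) := by
  rw [braiding, theta3F_eq, theta3F_eq, theta3F_eq, tInt_inv, tInt_inv]
  push_cast
  rfl

/-- `θ_3F` is an exchange-statistics function whose braiding is `-1` between any
two distinct nonzero anyons, and the three-fermion theory admits no Lagrangian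
subgroup. -/
theorem threeFermion_theory :
    IsExchangeStats theta3F ∧
    (∀ x y : ZMod 2 × ZMod 2, x ≠ 0 → y ≠ 0 → x ≠ y → braiding theta3F x y = -1) ∧
    (∀ L : AddSubgroup (ZMod 2 × ZMod 2), ¬ IsLagrangian theta3F L) := by
  refine ⟨⟨?_, ?_, ?_, ?_, ?_⟩, ?_, ?_⟩
  · intro a
    simp [theta3F]
  · simp [theta3F]
  · intro a
    have h : ∀ a : ZMod 2 × ZMod 2, -a = a := by decide
    rw [h]
  · intro a a' b
    rw [braiding_eq, braiding_eq, braiding_eq, ← Int.cast_mul, Int.cast_inj]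
    revert a a' b
    decide
  · intro a b b'
    rw [braiding_eq, braiding_eq, braiding_eq, ← Int.cast_mul, Int.cast_inj]
    revert a b b'
    decide
  · intro x y hx hy hxy
    have h : ∀ x y : ZMod 2 × ZMod 2, x ≠ 0 → y ≠ 0 → x ≠ y →
        tInt (x + y) * tInt x * tInt y = -1 := by decide
    rw [braiding_eq, h x y hx hy hxy]
    norm_num
  · rintro L ⟨h1, -, h3⟩
    have hL : ∀ c ∈ L, c = 0 := by
      intro c hc
      have h := h1 c hc
      by_contra hne
      rw [theta3F_eq, tInt, if_neg hne] at h
      norm_num at h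
    obtain ⟨c, hc, hb⟩ := h3 (1, 0) (fun hm => absurd (hL _ hm) (by decide))
    apply hb
    have h : tInt ((1, 0) + 0) * tInt (1, 0) * tInt 0 = 1 := by decide
    rw [hL c hc, braiding_eq, h]
    norm_num
end

section
/- Let p be a prime. On A = (ZMod p × ZMod p) × (ZMod p² × ZMod p²) define θ(((e₁,m₁),(e₂,m₂))) = exp(2πi·e₁.val·m₁.val/p)·exp(2πi·e₂.val·m₂.val/p²) (the product of a ℤ_p and a ℤ_{p²} toric code theory), with braiding B. Let a₁ = ((0,1),(0,0)) and a₂ = ((1,0),(0,1)). Then: (i) a₁ has additive order p and a₂ has additive order p²; (ii) for all integers j, n, θ(j•a₁ + n•a₂) = exp(2πi·j·n/p); in particular θ(a₁) = θ(a₂) = 1 and B(a₁,a₂) = exp(2πi/p); and (iii) the additive subgroup generated by {a₁, a₂} has cardinality p³. -/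
/-- The product of a `ℤ_p` and a `ℤ_{p²}` toric code theory on
`(ZMod p × ZMod p) × (ZMod p² × ZMod p²)`. -/
noncomputable def thetaStack (p : ℕ) (a : (ZMod p × ZMod p) × (ZMod (p ^ 2) × ZMod (p ^ 2))) : ℂ :=
  Complex.exp (2 * Real.pi * Complex.I * (a.1.1.val : ℂ) * (a.1.2.val : ℂ) / (p : ℂ)) *
    Complex.exp (2 * Real.pi * Complex.I * (a.2.1.val : ℂ) * (a.2.2.val : ℂ) / ((p : ℂ) ^ 2))

theorem theta_aux (p : ℕ) (hp : p.Prime) (j n : ℤ) :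
    thetaStack p ((((n : ZMod p), (j : ZMod p)), ((0 : ZMod (p ^ 2)), (n : ZMod (p ^ 2))))) =
      Complex.exp (2 * Real.pi * Complex.I * (j : ℂ) * (n : ℂ) / (p : ℂ)) := by
  haveI : NeZero p := ⟨hp.ne_zero⟩
  have hp0 : (p : ℂ) ≠ 0 := by exact_mod_cast hp.ne_zero
  have key : ∀ k : ℤ, ∃ q : ℤ, (k : ℂ) = (((k : ZMod p).val : ℕ) : ℂ) + p * q := by
    intro k
    refine ⟨k / p, ?_⟩
    have h1 : (((k : ZMod p).val : ℕ) : ℤ) = k % p := ZMod.val_intCast k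
    have h2 : k = (((k : ZMod p).val : ℕ) : ℤ) + p * (k / p) := by
      rw [h1]; exact (Int.emod_add_mul_ediv k p).symm
    exact_mod_cast h2
  obtain ⟨q, hq⟩ := key j
  obtain ⟨r, hr⟩ := key n
  have hz : (ZMod.val (0 : ZMod (p ^ 2))) = 0 := ZMod.val_zero
  simp only [thetaStack, hz]
  rw [hq, hr]
  simp only [Nat.cast_zero, mul_zero, zero_mul, zero_div, Complex.exp_zero, mul_one]
  rw [Complex.exp_eq_exp_iff_exists_int]
  refine ⟨-((((j : ZMod p).val : ℕ) : ℤ) * r + q * (((n : ZMod p).val : ℕ) : ℤ) + p * q * r), ?_⟩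
  push_cast
  field_simp
  ring

/-- In a stack of a `ℤ_p` and a `ℤ_{p²}` toric code, the anyons `a₁ = m₁` and
`a₂ = e₁m₂` have orders `p` and `p²`, satisfy
`θ(a₁^j a₂^n) = exp(2πi·j·n/p)` (so `θ(a₁) = θ(a₂) = 1` and
`B(a₁,a₂) = exp(2πi/p)`), and generate a subgroup of cardinality `p³`. -/
theorem zp_zpsq_subtheory (p : ℕ) (hp : p.Prime) :
    addOrderOf ((((0 : ZMod p), 1), ((0 : ZMod (p ^ 2)), 0)) :
        (ZMod p × ZMod p) × (ZMod (p ^ 2) × ZMod (p ^ 2))) = p ∧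
    addOrderOf ((((1 : ZMod p), 0), ((0 : ZMod (p ^ 2)), 1)) :
        (ZMod p × ZMod p) × (ZMod (p ^ 2) × ZMod (p ^ 2))) = p ^ 2 ∧
    (∀ j n : ℤ,
      thetaStack p
          (j • ((((0 : ZMod p), 1), ((0 : ZMod (p ^ 2)), 0)) :
              (ZMod p × ZMod p) × (ZMod (p ^ 2) × ZMod (p ^ 2))) +
            n • ((((1 : ZMod p), 0), ((0 : ZMod (p ^ 2)), 1)) :
              (ZMod p × ZMod p) × (ZMod (p ^ 2) × ZMod (p ^ 2)))) =
        Complex.exp (2 * Real.pi * Complex.I * (j : ℂ) * (n : ℂ) / (p : ℂ))) ∧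
    thetaStack p (((0, 1), (0, 0))) = 1 ∧
    thetaStack p (((1, 0), (0, 1))) = 1 ∧
    braiding (thetaStack p) (((0, 1), (0, 0))) (((1, 0), (0, 1))) =
      Complex.exp (2 * Real.pi * Complex.I / (p : ℂ)) ∧
    Nat.card
        (AddSubgroup.closure
          ({(((0 : ZMod p), 1), ((0 : ZMod (p ^ 2)), 0)),
            (((1 : ZMod p), 0), ((0 : ZMod (p ^ 2)), 1))} :
            Set ((ZMod p × ZMod p) × (ZMod (p ^ 2) × ZMod (p ^ 2))))) = p ^ 3 := by
  haveI : NeZero p := ⟨hp.ne_zero⟩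
  haveI : NeZero (p ^ 2) := ⟨pow_ne_zero 2 hp.ne_zero⟩
  have hcomb : ∀ j n : ℤ,
      (j • ((((0 : ZMod p), 1), ((0 : ZMod (p ^ 2)), 0)) :
              (ZMod p × ZMod p) × (ZMod (p ^ 2) × ZMod (p ^ 2))) +
            n • ((((1 : ZMod p), 0), ((0 : ZMod (p ^ 2)), 1)) :
              (ZMod p × ZMod p) × (ZMod (p ^ 2) × ZMod (p ^ 2)))) =
        (((n : ZMod p), (j : ZMod p)), ((0 : ZMod (p ^ 2)), (n : ZMod (p ^ 2)))) := by
    intro j n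
    simp
  have h10 := theta_aux p hp 1 0
  have h01 := theta_aux p hp 0 1
  have h11 := theta_aux p hp 1 1
  simp only [Int.cast_one, Int.cast_zero, mul_zero, zero_mul, zero_div, Complex.exp_zero,
    mul_one] at h10 h01 h11
  refine ⟨?_, ?_, ?_, h10, h01, ?_, ?_⟩
  · simp [Prod.addOrderOf]
  · simp only [Prod.addOrderOf, addOrderOf_zero, ZMod.addOrderOf_one, Nat.lcm_one_right,
      Nat.lcm_one_left]
    exact Nat.lcm_eq_right (Dvd.intro_left p (by ring))
  · intro j n
    rw [hcomb, theta_aux p hp]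
  · simp only [braiding, h10, h01, inv_one, mul_one, Prod.mk_add_mk, zero_add, add_zero, h11]
  · let f : ZMod p × ZMod (p ^ 2) → (ZMod p × ZMod p) × (ZMod (p ^ 2) × ZMod (p ^ 2)) :=
      fun x => ((ZMod.castHom (Dvd.intro_left p (by ring) : p ∣ p ^ 2) (ZMod p) x.2, x.1), (0, x.2))
    have hf : Function.Injective f := by
      rintro ⟨a, b⟩ ⟨c, d⟩ h
      simp only [f, Prod.mk.injEq] at h
      exact Prod.ext h.1.2 h.2.2
    have hset : ((AddSubgroup.closure
          ({(((0 : ZMod p), 1), ((0 : ZMod (p ^ 2)), 0)),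
            (((1 : ZMod p), 0), ((0 : ZMod (p ^ 2)), 1))} :
            Set ((ZMod p × ZMod p) × (ZMod (p ^ 2) × ZMod (p ^ 2))))) : Set _) = Set.range f := by
      ext x
      rw [SetLike.mem_coe, AddSubgroup.mem_closure_pair]
      constructor
      · rintro ⟨j, n, rfl⟩
        refine ⟨((j : ZMod p), (n : ZMod (p ^ 2))), ?_⟩
        rw [hcomb]
        simp only [f, map_intCast]
      · rintro ⟨⟨a, b⟩, rfl⟩
        obtain ⟨j, rfl⟩ := ZMod.intCast_surjective a
        obtain ⟨n, rfl⟩ := ZMod.intCast_surjective b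
        refine ⟨j, n, ?_⟩
        rw [hcomb]
        simp only [f, map_intCast]
    rw [← SetLike.coe_sort_coe, hset, Nat.card_range_of_injective hf, Nat.card_prod,
      Nat.card_zmod, Nat.card_zmod]
    ring
end

section
/- Let p be a prime and A = (ZMod p × ZMod p) × (ZMod p² × ZMod p²) with θ(((e₁,m₁),(e₂,m₂))) = exp(2πi·e₁.val·m₁.val/p)·exp(2πi·e₂.val·m₂.val/p²) and braiding B. Let a₁ = ((0,1),(0,0)), a₂ = ((1,0),(0,1)), and let g₁ = ((0,−1),(p,0)) and g₂ = ((0,0),(0,−1)) be the gauged-out anyons m₁⁻¹e₂^p and m₂⁻¹. Then the set of anyons braiding trivially with both g₁ and g₂ is exactly the subgroup generated by a₁ and a₂: {x ∈ A : B(x,g₁) = 1 ∧ B(x,g₂) = 1} = AddSubgroup.closure {a₁, a₂}. -/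
theorem thetaStack_eq (p : ℕ) [NeZero p] (a : (ZMod p × ZMod p) × (ZMod (p ^ 2) × ZMod (p ^ 2))) :
    thetaStack p a = ZMod.stdAddChar (a.1.1 * a.1.2) * ZMod.stdAddChar (a.2.1 * a.2.2) := by
  have key : ∀ (N : ℕ) [NeZero N] (x y : ZMod N), ZMod.stdAddChar (x * y) =
      Complex.exp (2 * Real.pi * Complex.I * (x.val : ℂ) * (y.val : ℂ) / (N : ℂ)) := by
    intro N _ x y
    have h : x * y = (((x.val * y.val : ℕ) : ℤ) : ZMod N) := by
      push_cast
      simp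
    rw [h, ZMod.stdAddChar_coe]
    congr 1
    push_cast
    ring
  rw [key, key, thetaStack]
  push_cast
  rfl

theorem stdAddChar_p_mul (p : ℕ) [NeZero p] (m : ZMod (p ^ 2)) :
    (ZMod.stdAddChar ((p : ZMod (p ^ 2)) * m) : ℂ) = ZMod.stdAddChar ((m.val : ℕ) : ZMod p) := by
  have hp : (p : ℂ) ≠ 0 := NeZero.ne _
  have h : (p : ZMod (p ^ 2)) * m = (((p * m.val : ℕ) : ℤ) : ZMod (p ^ 2)) := by
    push_cast
    simp
  have h' : ((m.val : ℕ) : ZMod p) = (((m.val : ℕ) : ℤ) : ZMod p) := by push_cast; rfl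
  rw [h, h', ZMod.stdAddChar_coe, ZMod.stdAddChar_coe]
  congr 1
  push_cast
  field_simp

theorem braiding_thetaStack (p : ℕ) [NeZero p]
    (a b : (ZMod p × ZMod p) × (ZMod (p ^ 2) × ZMod (p ^ 2))) :
    braiding (thetaStack p) a b = ZMod.stdAddChar (a.1.1 * b.1.2 + b.1.1 * a.1.2) *
      ZMod.stdAddChar (a.2.1 * b.2.2 + b.2.1 * a.2.2) := by
  have h1 : ∀ (N : ℕ) [NeZero N] (x : ZMod N), (ZMod.stdAddChar x : ℂ) ≠ 0 := by
    intro N _ x h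
    have := AddChar.map_add_eq_mul (ZMod.stdAddChar (N := N)) x (-x)
    simp [h] at this
  rw [braiding, thetaStack_eq, thetaStack_eq, thetaStack_eq]
  have e1 : (a + b).1.1 * (a + b).1.2 =
      (a.1.1 * b.1.2 + b.1.1 * a.1.2) + a.1.1 * a.1.2 + b.1.1 * b.1.2 := by
    simp only [Prod.fst_add, Prod.snd_add]; ring
  have e2 : (a + b).2.1 * (a + b).2.2 =
      (a.2.1 * b.2.2 + b.2.1 * a.2.2) + a.2.1 * a.2.2 + b.2.1 * b.2.2 := by
    simp only [Prod.fst_add, Prod.snd_add]; ring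
  rw [e1, e2]
  generalize a.1.1 * b.1.2 + b.1.1 * a.1.2 = u
  generalize a.2.1 * b.2.2 + b.2.1 * a.2.2 = v
  simp only [AddChar.map_add_eq_mul]
  have := h1 p (a.1.1 * a.1.2)
  have := h1 p (b.1.1 * b.1.2)
  have := h1 _ (a.2.1 * a.2.2)
  have := h1 _ (b.2.1 * b.2.2)
  field_simp

theorem stdAddChar_eq_one_iff' (N : ℕ) [NeZero N] (x : ZMod N) :
    (ZMod.stdAddChar x : ℂ) = 1 ↔ x = 0 := by
  rw [← AddChar.map_zero_eq_one (ZMod.stdAddChar (N := N))]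
  exact ZMod.injective_stdAddChar.eq_iff

/-- Gauging out `g₁ = m₁⁻¹e₂^p` and `g₂ = m₂⁻¹` in the stack of a `ℤ_p` and a
`ℤ_{p²}` toric code leaves exactly the subtheory generated by `a₁ = m₁` and
`a₂ = e₁m₂`: the anyons braiding trivially with both `g₁` and `g₂` form the
subgroup generated by `a₁` and `a₂`. -/
theorem gauge_out_zp_zpsq (p : ℕ) (hp : p.Prime) :
    {x : (ZMod p × ZMod p) × (ZMod (p ^ 2) × ZMod (p ^ 2)) |
        braiding (thetaStack p) x (((0, -1), ((p : ZMod (p ^ 2)), 0))) = 1 ∧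
        braiding (thetaStack p) x (((0, 0), (0, -1))) = 1} =
      (AddSubgroup.closure
          ({(((0 : ZMod p), 1), ((0 : ZMod (p ^ 2)), 0)),
            (((1 : ZMod p), 0), ((0 : ZMod (p ^ 2)), 1))} :
            Set ((ZMod p × ZMod p) × (ZMod (p ^ 2) × ZMod (p ^ 2)))) :
        Set ((ZMod p × ZMod p) × (ZMod (p ^ 2) × ZMod (p ^ 2)))) := by
  haveI : NeZero p := ⟨hp.ne_zero⟩
  have hd : p ∣ p ^ 2 := dvd_pow_self p two_ne_zero
  ext ⟨⟨e, m⟩, ⟨f, n⟩⟩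
  rw [SetLike.mem_coe, AddSubgroup.mem_closure_pair, Set.mem_setOf_eq,
    braiding_thetaStack, braiding_thetaStack]
  simp only [mul_zero, zero_mul, add_zero, zero_add, stdAddChar_p_mul,
    AddChar.map_zero_eq_one, one_mul]
  rw [← AddChar.map_add_eq_mul, stdAddChar_eq_one_iff', stdAddChar_eq_one_iff']
  have hn : ((n.val : ℕ) : ZMod p) = ZMod.castHom hd (ZMod p) n := by
    rw [ZMod.castHom_apply, ZMod.natCast_val]
  rw [hn]
  constructor
  · rintro ⟨h1, h2⟩
    have h2 : f = 0 := by simpa using h2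
    have h1 : e = ZMod.castHom hd (ZMod p) n := by
      linear_combination -h1
    refine ⟨(m.val : ℤ), (n.val : ℤ), ?_⟩
    ext
    · simp [h1]
    · simp
    · simp [h2]
    · simp
  · rintro ⟨x, y, h⟩
    simp only [Prod.smul_mk, Prod.mk_add_mk, Prod.mk.injEq] at h
    obtain ⟨⟨h1, h2⟩, h3, h4⟩ := h
    subst h1 h3 h4
    simp
end
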